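/- Let a, b, c be pairwise distinct elements of ℂ ∖ {0,1}; define the linear polynomials in z: A₁ = (b−z)/(b−c), B₁ = (c−z)/(c−b), the constants a₁ = (a−b)/(b−c), b₁ = (a−c)/(c−b), and set P(z) = z(z−1)·A₁B₁(A₁b₁ − B₁a₁). Let B = ℂ[z,w₂,t₃,x]/(w₂³ − P(z), x³ − t₃(t₃+1)) be the coordinate ring of the product C₁ × F₁ of the affine curve C₁: w₂³ = P(z) and the affine curve F₁: x³ = t₃(t₃+1), let K = Frac(B), and let τ be the ℂ-algebra automorphism of K of order 3 determined by τ(w₂) = ω²·w₂, τ(x) = ω²·x, τ(z) = z, τ(t₃) = t₃ (the diagonal ℤ/3ℤ action). Then the fixed field K^τ is isomorphic as a ℂ-algebra to the function field Frac(ℂ[z,t₃,w₁]/(w₁³·P(z) − t₃(t₃+1))) of the affine surface S₂, an isomorphism being induced by w₁ ↦ x/w₂ (with z, t₃ unchanged). -/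

import Mathlib

/-!
Formalization conventions.

* The function field of an affine variety whose coordinate ring `ℂ[x₁,…,xₙ]/I` is an
  integral domain is formalized as `FractionRing` of that coordinate ring (for the total
  rings of fractions of the rings appearing here this is the function field).
* Two such varieties are birationally equivalent iff their function fields are
  isomorphic as `ℂ`-algebras.
-/

noncomputable section
open MvPolynomial

/-- `ω = exp(2πi/3) ∈ ℂ`, a fixed primitive cube root of unity. -/
def ω : ℂ := Complex.exp (2 * Real.pi * Complex.I / 3)

/-- Coordinate ring of the affine hypersurface `f = 0` in `ℂⁿ`. -/
abbrev HSurf {n : ℕ} (f : MvPolynomial (Fin n) ℂ) : Type :=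
  MvPolynomial (Fin n) ℂ ⧸ Ideal.span {f}

/-- Coordinate ring of the affine variety `f = g = 0` in `ℂⁿ`. -/
abbrev HSurf2 {n : ℕ} (f g : MvPolynomial (Fin n) ℂ) : Type :=
  MvPolynomial (Fin n) ℂ ⧸ Ideal.span {f, g}

/-- The image of a polynomial `p` in the function field of the hypersurface `f = 0`. -/
def cls {n : ℕ} (f : MvPolynomial (Fin n) ℂ) (p : MvPolynomial (Fin n) ℂ) :
    FractionRing (HSurf f) :=
  algebraMap (HSurf f) (FractionRing (HSurf f)) (Ideal.Quotient.mk _ p)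

/-- The image of a polynomial `p` in the function field of the variety `f = g = 0`. -/
def cls2 {n : ℕ} (f g : MvPolynomial (Fin n) ℂ) (p : MvPolynomial (Fin n) ℂ) :
    FractionRing (HSurf2 f g) :=
  algebraMap (HSurf2 f g) (FractionRing (HSurf2 f g)) (Ideal.Quotient.mk _ p)

/-- The constant `a₁ = (a−b)/(b−c)`. -/
def a₁ (a b c : ℂ) : ℂ := (a - b) / (b - c)

/-- The constant `b₁ = (a−c)/(c−b)`. -/
def b₁ (a b c : ℂ) : ℂ := (a - c) / (c - b)

/-- `A₁ = (b−z)/(b−c)` as a polynomial in the coordinates of `C₁ × F₁`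
(`z = X 0`, `w₂ = X 1`, `t₃ = X 2`, `x = X 3`). -/
def A₁4 (b c : ℂ) : MvPolynomial (Fin 4) ℂ := C (b - c)⁻¹ * (C b - X 0)

/-- `B₁ = (c−z)/(c−b)`. -/
def B₁4 (b c : ℂ) : MvPolynomial (Fin 4) ℂ := C (c - b)⁻¹ * (C c - X 0)

/-- `P(z) = z(z−1)·A₁B₁(A₁b₁ − B₁a₁)` as a polynomial in `z = X 0`. -/
def P4 (a b c : ℂ) : MvPolynomial (Fin 4) ℂ :=
  X 0 * (X 0 - 1) * A₁4 b c * B₁4 b c * (A₁4 b c * C (b₁ a b c) - B₁4 b c * C (a₁ a b c))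

/-- Defining polynomial of the curve `C₁ : w₂³ = P(z)`, as an equation in `ℂ⁴`. -/
def pC₁ (a b c : ℂ) : MvPolynomial (Fin 4) ℂ := X 1 ^ 3 - P4 a b c

/-- Defining polynomial of the curve `F₁ : x³ = t₃(t₃+1)`, as an equation in `ℂ⁴`. -/
def pF₁4 : MvPolynomial (Fin 4) ℂ := X 3 ^ 3 - X 2 * (X 2 + 1)

/-- `A₁` in the coordinates of `S₂` (`z = X 0`, `t₃ = X 1`, `w₁ = X 2`). -/
def A₁' (b c : ℂ) : MvPolynomial (Fin 3) ℂ := C (b - c)⁻¹ * (C b - X 0)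

/-- `B₁` in the coordinates of `S₂`. -/
def B₁' (b c : ℂ) : MvPolynomial (Fin 3) ℂ := C (c - b)⁻¹ * (C c - X 0)

/-- Defining polynomial of the affine surface `S₂ : w₁³·P(z) = t₃(t₃+1)`. -/
def pS₂ (a b c : ℂ) : MvPolynomial (Fin 3) ℂ :=
  X 2 ^ 3 * (X 0 * (X 0 - 1) * A₁' b c * B₁' b c
      * (A₁' b c * C (b₁ a b c) - B₁' b c * C (a₁ a b c)))
    - X 1 * (X 1 + 1)

structure IsB (R B : Type) [CommRing R] [CommRing B] [Algebra R B] (P Q : R) (w x : B) :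
    Prop where
  hw : w ^ 3 = algebraMap R B P
  hx : x ^ 3 = algebraMap R B Q
  gen : Algebra.adjoin R {w, x} = ⊤
  univ : ∀ (T : Type) [CommRing T] [Algebra R T] (w' x' : T), w' ^ 3 = algebraMap R T P →
    x' ^ 3 = algebraMap R T Q → ∃ f : B →ₐ[R] T, f w = w' ∧ f x = x'

structure IsS (R S : Type) [CommRing R] [CommRing S] [Algebra R S] (P Q : R) (v : S) :
    Prop where
  hv : algebraMap R S P * v ^ 3 = algebraMap R S Q
  gen : Algebra.adjoin R {v} = ⊤
  univ : ∀ (T : Type) [CommRing T] [Algebra R T] (v' : T),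
    algebraMap R T P * v' ^ 3 = algebraMap R T Q → ∃ f : S →ₐ[R] T, f v = v'
  reg : algebraMap R S P ∈ nonZeroDivisors S

namespace IsB

variable {R B : Type} [CommRing R] [IsDomain R] [CommRing B] [Algebra R B] {P Q : R} {w x : B}

lemma hom_ext (h : IsB R B P Q w x) {T : Type} [CommRing T] [Algebra R T] {f g : B →ₐ[R] T}
    (h1 : f w = g w) (h2 : f x = g x) : f = g := by
  apply AlgHom.ext_of_adjoin_eq_top h.gen
  rintro y (rfl | rfl)
  · exact h1
  · exact h2

lemma reg (h : IsB R B P Q w x) {r : R} (hr : r ≠ 0) : algebraMap R B r ∈ nonZeroDivisors B := by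
  let p : Polynomial R := Polynomial.X ^ 3 - Polynomial.C P
  let M1 := AdjoinRoot p
  let q : Polynomial M1 := Polynomial.X ^ 3 - Polynomial.C (algebraMap R M1 Q)
  let M := AdjoinRoot q
  have : Module.Free R M1 :=
    (Polynomial.monic_X_pow_sub_C P (by norm_num : (3:ℕ) ≠ 0)).free_adjoinRoot
  have : Module.Free M1 M :=
    (Polynomial.monic_X_pow_sub_C (algebraMap R M1 Q) (by norm_num : (3:ℕ) ≠ 0)).free_adjoinRoot
  have : Module.Free R M := Module.Free.trans (R := R) (S := M1) (M := M)
  have e1 : (algebraMap M1 M (AdjoinRoot.root p)) ^ 3 = algebraMap R M P := by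
    have := AdjoinRoot.eval₂_root p
    simp only [p, Polynomial.eval₂_sub, Polynomial.eval₂_X_pow, Polynomial.eval₂_C,
      sub_eq_zero] at this
    rw [← map_pow, this, IsScalarTower.algebraMap_apply R M1 M]
    rfl
  have e2 : (AdjoinRoot.root q) ^ 3 = algebraMap R M Q := by
    have := AdjoinRoot.eval₂_root q
    simp only [q, Polynomial.eval₂_sub, Polynomial.eval₂_X_pow, Polynomial.eval₂_C,
      sub_eq_zero] at this
    rw [this, IsScalarTower.algebraMap_apply R M1 M]
    rfl
  obtain ⟨f, f1, f2⟩ := h.univ M _ _ e1 e2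
  let g1 : M1 →ₐ[R] B := AdjoinRoot.liftAlgHom p (Algebra.ofId R B) w (by
    simp [p, h.hw, Algebra.ofId_apply])
  have hg1 : g1 (AdjoinRoot.root p) = w := AdjoinRoot.liftAlgHom_root _ _ _ _
  let g : M →ₐ[R] B := AdjoinRoot.liftAlgHom q g1 x (by
    simp [q, h.hx])
  have hg : ∀ b, g (f b) = b := by
    intro b
    have : g.comp f = AlgHom.id R B := by
      apply h.hom_ext
      · simp only [AlgHom.comp_apply, f1, AlgHom.id_apply]
        rw [← hg1]
        exact AdjoinRoot.liftAlgHom_of _ _ _ _ _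
      · simp only [AlgHom.comp_apply, f2, AlgHom.id_apply]
        exact AdjoinRoot.liftAlgHom_root _ _ _ _
    exact congrArg (fun k => k b) this
  rw [mem_nonZeroDivisors_iff_right]
  intro b hb
  have : r • f b = 0 := by
    rw [← map_smul, Algebra.smul_def, mul_comm, hb, map_zero]
  have := (smul_eq_zero.mp this).resolve_left hr
  rw [← hg b, this, map_zero]

lemma inj (h : IsB R B P Q w x) : Function.Injective (algebraMap R B) := by
  let L := AlgebraicClosure (FractionRing R)
  obtain ⟨y, hy⟩ := IsAlgClosed.exists_pow_nat_eq (algebraMap R L P) (n := 3) (by norm_num)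
  obtain ⟨z, hz⟩ := IsAlgClosed.exists_pow_nat_eq (algebraMap R L Q) (n := 3) (by norm_num)
  obtain ⟨f, -, -⟩ := h.univ L y z hy hz
  have hi : Function.Injective (algebraMap R L) := by
    rw [IsScalarTower.algebraMap_eq R (FractionRing R) L]
    exact (algebraMap (FractionRing R) L).injective.comp (IsFractionRing.injective R _)
  rw [← f.comp_algebraMap] at hi
  exact Function.Injective.of_comp hi

lemma reg_w (h : IsB R B P Q w x) (hP : P ≠ 0) : w ∈ nonZeroDivisors B := by
  have := h.reg hP
  rw [← h.hw, pow_succ] at this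
  exact (mul_mem_nonZeroDivisors.mp this).2

lemma reg_x (h : IsB R B P Q w x) (hQ : Q ≠ 0) : x ∈ nonZeroDivisors B := by
  have := h.reg hQ
  rw [← h.hx, pow_succ] at this
  exact (mul_mem_nonZeroDivisors.mp this).2

lemma isIntegral (h : IsB R B P Q w x) (b : B) : IsIntegral R b := by
  have : Algebra.adjoin R {w, x} ≤ integralClosure R B := by
    rw [Algebra.adjoin_le_iff]
    rintro y (rfl | rfl)
    · exact IsIntegral.of_pow (n := 3) (by norm_num) (h.hw ▸ isIntegral_algebraMap)
    · exact IsIntegral.of_pow (n := 3) (by norm_num) (h.hx ▸ isIntegral_algebraMap)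
  rw [h.gen] at this
  exact this trivial

lemma dvd (h : IsB R B P Q w x) {b : B} (hb : b ∈ nonZeroDivisors B) :
    ∃ r : R, r ≠ 0 ∧ b ∣ algebraMap R B r :=
  (h.isIntegral b).isAlgebraic.exists_nonzero_dvd hb

/-- Independence of `w², xw, x²`. -/
lemma indep (h : IsB R B P Q w x) (hP : P ≠ 0) (hQ : Q ≠ 0) {ζ : R} (hζ : 1 + ζ + ζ ^ 2 = 0)
    (h3 : IsUnit (3 : R)) {g0 g1 g2 : R}
    (e : algebraMap R B g0 * w ^ 2 + algebraMap R B g1 * (x * w) + algebraMap R B g2 * x ^ 2 = 0) :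
    g0 = 0 ∧ g1 = 0 ∧ g2 = 0 := by
  have hζ3 : ζ ^ 3 = 1 := by linear_combination (ζ - 1) * hζ
  obtain ⟨f, f1, f2⟩ := h.univ B (algebraMap R B ζ * w) x
    (by rw [mul_pow, ← map_pow, hζ3, map_one, one_mul, h.hw]) h.hx
  have e' := congrArg f e
  have e'' := congrArg f e'
  simp only [map_add, map_mul, map_pow, f1, f2, AlgHom.commutes, map_zero] at e' e''
  have z1 : 1 + algebraMap R B ζ + algebraMap R B ζ ^ 2 = 0 := by
    rw [← map_pow, ← map_one (algebraMap R B), ← map_add, ← map_add, hζ, map_zero]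
  obtain ⟨u, hu⟩ := h3.exists_left_inv
  have hu' : algebraMap R B u * 3 = 1 := by
    rw [← map_ofNat (algebraMap R B) 3, ← map_mul, hu, map_one]
  set s := algebraMap R B ζ
  have s3 : s ^ 3 = 1 := by linear_combination (s - 1) * z1
  have aux : ∀ {g : R} {y : B}, y ∈ nonZeroDivisors B → algebraMap R B g * y * 3 = 0 → g = 0 := by
    intro g y hy hg
    have : algebraMap R B g * y = 0 := by
      linear_combination algebraMap R B u * hg - algebraMap R B g * y * hu'
    apply h.inj
    rw [map_zero]
    exact (mem_nonZeroDivisors_iff_right.mp hy) _ this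
  have hw := h.reg_w hP
  have hx := h.reg_x hQ
  refine ⟨aux (pow_mem hw 2) ?_, aux (mul_mem hx hw) ?_, aux (pow_mem hx 2) ?_⟩
  · linear_combination e + s * e' + s ^ 2 * e'' - algebraMap R B g0 * w ^ 2 * (s3 + (s ^ 3 + 1) * s3)
      - algebraMap R B g1 * (x * w) * (z1 + s * s3) - algebraMap R B g2 * x ^ 2 * z1
  · linear_combination e + s ^ 2 * e' + s * e'' - algebraMap R B g0 * w ^ 2 * (z1 + (s + s ^ 2) * s3)
      - algebraMap R B g1 * (x * w) * (2 * s3) - algebraMap R B g2 * x ^ 2 * z1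
  · linear_combination e + e' + e'' - algebraMap R B g0 * w ^ 2 * (z1 + s * s3) - algebraMap R B g1 * (x * w) * z1

end IsB

namespace IsS

variable {R S : Type} [CommRing R] [IsDomain R] [CommRing S] [Algebra R S] {P Q : R} {v : S}

lemma hom_ext (h : IsS R S P Q v) {T : Type} [CommRing T] [Algebra R T] {f g : S →ₐ[R] T}
    (h1 : f v = g v) : f = g := by
  apply AlgHom.ext_of_adjoin_eq_top h.gen
  rintro y rfl
  exact h1

lemma normal (h : IsS R S P Q v) (s : S) : ∃ (n : ℕ) (g0 g1 g2 : R),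
    algebraMap R S P ^ n * s =
      algebraMap R S g0 + algebraMap R S g1 * v + algebraMap R S g2 * v ^ 2 := by
  have hs : s ∈ (Algebra.adjoin R {v} : Subalgebra R S) := h.gen ▸ trivial
  rw [Algebra.adjoin_singleton_eq_range_aeval] at hs
  obtain ⟨p, rfl⟩ := hs
  change ∃ (n : ℕ) (g0 g1 g2 : R), algebraMap R S P ^ n * (Polynomial.aeval v p) = _
  induction p using Polynomial.induction_on with
  | C r => exact ⟨0, r, 0, 0, by simp⟩
  | add p q hp hq =>
    obtain ⟨n, a0, a1, a2, e⟩ := hp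
    obtain ⟨m, b0, b1, b2, e'⟩ := hq
    refine ⟨n + m, P ^ m * a0 + P ^ n * b0, P ^ m * a1 + P ^ n * b1, P ^ m * a2 + P ^ n * b2, ?_⟩
    simp only [map_add, map_mul, map_pow]
    linear_combination algebraMap R S P ^ m * e + algebraMap R S P ^ n * e'
  | monomial k r hk =>
    obtain ⟨n, a0, a1, a2, e⟩ := hk
    refine ⟨n + 1, a2 * Q, P * a0, P * a1, ?_⟩
    rw [pow_succ Polynomial.X, ← mul_assoc, map_mul _ (_ * _), Polynomial.aeval_X,
      map_mul _ a2, map_mul _ P, map_mul _ P]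
    linear_combination algebraMap R S P * v * e + algebraMap R S a2 * h.hv

lemma dvd (h : IsS R S P Q v) (hP : P ≠ 0) {s : S} (hs : s ∈ nonZeroDivisors S) :
    ∃ r : R, r ≠ 0 ∧ s ∣ algebraMap R S r := by
  have hv : IsAlgebraic R v := by
    refine ⟨Polynomial.C P * Polynomial.X ^ 3 - Polynomial.C Q, ?_, ?_⟩
    · intro h0
      apply hP
      have := congrArg (fun p => Polynomial.coeff p 3) h0
      simpa [Polynomial.coeff_C] using this
    · simp [h.hv]
  have := (Algebra.isAlgebraic_adjoin_singleton_iff.mpr hv) s (h.gen ▸ trivial)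
  exact this.exists_nonzero_dvd hs

end IsS

lemma sum_roots {ζ : ℂ} (hζ : 1 + ζ + ζ ^ 2 = 0) (n : ℕ) (hn : ¬ 3 ∣ n) :
    1 + ζ ^ n + (ζ ^ n) ^ 2 = 0 := by
  have hζ3 : ζ ^ 3 = 1 := by linear_combination (ζ - 1) * hζ
  obtain ⟨k, hk | hk⟩ : ∃ k, n = 3 * k + 1 ∨ n = 3 * k + 2 :=
    ⟨n / 3, by omega⟩
  · rw [hk, pow_add, pow_mul, hζ3]; simpa using hζ
  · rw [hk, pow_add, pow_mul, hζ3]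
    simp only [one_pow, one_mul]
    linear_combination hζ + ζ * hζ3

theorem main_abs {R B S : Type} [CommRing R] [IsDomain R] [Algebra ℂ R]
    [CommRing B] [Algebra R B] [Algebra ℂ B] [IsScalarTower ℂ R B]
    [CommRing S] [Algebra R S] [Algebra ℂ S] [IsScalarTower ℂ R S]
    {P Q : R} (hP : P ≠ 0) (hQ : Q ≠ 0) {w x : B} {v : S}
    (hB : IsB R B P Q w x) (hS : IsS R S P Q v) (ζ : ℂ) (hζ : 1 + ζ + ζ ^ 2 = 0) :
    ∃ τ : FractionRing B ≃ₐ[ℂ] FractionRing B,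
      orderOf τ = 3 ∧
      τ (algebraMap B _ w) = ζ • algebraMap B _ w ∧
      τ (algebraMap B _ x) = ζ • algebraMap B _ x ∧
      (∀ r : R, τ (algebraMap B _ (algebraMap R B r)) = algebraMap B _ (algebraMap R B r)) ∧
      ∃ ψ : FractionRing S ≃ₐ[ℂ] (AlgHom.equalizer τ.toAlgHom (AlgHom.id ℂ (FractionRing B))),
        (↑(ψ (algebraMap S _ v)) : FractionRing B) * algebraMap B _ w = algebraMap B _ x ∧
        ∀ r : R, (↑(ψ (algebraMap S _ (algebraMap R S r))) : FractionRing B) =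
          algebraMap B _ (algebraMap R B r) := by
  let K := FractionRing B
  have hζ3 : ζ ^ 3 = 1 := by linear_combination (ζ - 1) * hζ
  have hζ1 : ζ ≠ 1 := by rintro rfl; norm_num at hζ
  have injK : Function.Injective (algebraMap B K) := IsFractionRing.injective B K
  have cube : ∀ y : B, (ζ • y) ^ 3 = y ^ 3 := fun y => by
    rw [smul_pow, hζ3, one_smul]
  -- the automorphism of `B`
  obtain ⟨f, fw, fx⟩ := hB.univ B (ζ • w) (ζ • x) (by rw [cube, hB.hw]) (by rw [cube, hB.hx])
  have fsm : ∀ (c : ℂ) (y : B), f (c • y) = c • f y := fun c y => by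
    rw [← IsScalarTower.algebraMap_smul R c y, map_smul, IsScalarTower.algebraMap_smul]
  have fff : f.comp (f.comp f) = AlgHom.id R B := by
    apply hB.hom_ext
    · simp only [AlgHom.comp_apply, fw, fsm, smul_smul, AlgHom.id_apply]
      rw [show ζ * ζ * ζ = ζ ^ 3 by ring, hζ3, one_smul]
    · simp only [AlgHom.comp_apply, fx, fsm, smul_smul, AlgHom.id_apply]
      rw [show ζ * ζ * ζ = ζ ^ 3 by ring, hζ3, one_smul]
  let σ : B ≃ₐ[R] B := AlgEquiv.ofAlgHom f (f.comp f) fff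
    (by rw [AlgHom.comp_assoc]; exact fff)
  let τR : K ≃ₐ[R] K := IsFractionRing.algEquivOfAlgEquiv σ
  have τRb : ∀ b, τR (algebraMap B K b) = algebraMap B K (f b) := fun b =>
    IsFractionRing.algEquivOfAlgEquiv_algebraMap σ b
  let τ : K ≃ₐ[ℂ] K := τR.restrictScalars ℂ
  have τb : ∀ b, τ (algebraMap B K b) = algebraMap B K (f b) := τRb
  have alg_smul : ∀ (c : ℂ) (b : B), algebraMap B K (c • b) = c • algebraMap B K b := fun c b =>
    algebraMap.coe_smul ..
  have τw : τ (algebraMap B K w) = ζ • algebraMap B K w := by rw [τb, fw, alg_smul]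
  have τx : τ (algebraMap B K x) = ζ • algebraMap B K x := by rw [τb, fx, alg_smul]
  have τr : ∀ r : R, τ (algebraMap B K (algebraMap R B r)) = algebraMap B K (algebraMap R B r) :=
    fun r => by rw [τb, f.commutes]
  have unitK : ∀ {b : B}, b ∈ nonZeroDivisors B → IsUnit (algebraMap B K b) := fun {b} hb =>
    IsLocalization.map_units K ⟨b, hb⟩
  have uw := unitK (hB.reg_w hP)
  have unitR : ∀ {r : R}, r ≠ 0 → IsUnit (algebraMap R K r) := fun {r} hr => by
    rw [IsScalarTower.algebraMap_apply R B K]; exact unitK (hB.reg hr)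
  have nontB : Nontrivial B := hB.inj.nontrivial
  have nontK : Nontrivial K := injK.nontrivial
  have hord : orderOf τ = 3 := by
    apply orderOf_eq_prime
    · have : (τ.toAlgHom.comp (τ.toAlgHom.comp τ.toAlgHom)).toRingHom = RingHom.id K := by
        apply IsLocalization.ringHom_ext (nonZeroDivisors B)
        ext b
        change τ (τ (τ (algebraMap B K b))) = algebraMap B K b
        rw [τb, τb, τb]
        exact congrArg (fun k => algebraMap B K (k b)) fff
      ext y
      exact congrArg (fun k => k y) this
    · intro h1
      rw [h1] at τw
      have : (ζ - 1) • algebraMap B K w = 0 := by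
        rw [sub_smul, one_smul, ← τw]; simp
      rcases smul_eq_zero.mp this with h | h
      · exact hζ1 (sub_eq_zero.mp h)
      · rw [h] at uw
        exact not_isUnit_zero uw
  refine ⟨τ, hord, τw, τx, τr, ?_⟩
  -- the element x / w
  obtain ⟨iw, hiw⟩ := uw.exists_right_inv
  let y : K := algebraMap B K x * iw
  have hyw : y * algebraMap B K w = algebraMap B K x := by
    linear_combination algebraMap B K x * hiw
  have hwK : algebraMap B K w ^ 3 = algebraMap R K P := by
    rw [← map_pow, hB.hw, ← IsScalarTower.algebraMap_apply]
  have hxK : algebraMap B K x ^ 3 = algebraMap R K Q := by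
    rw [← map_pow, hB.hx, ← IsScalarTower.algebraMap_apply]
  have hy : algebraMap R K P * y ^ 3 = algebraMap R K Q := by
    rw [← hwK, ← hxK, ← hyw]; ring
  obtain ⟨φ, hφ⟩ := hS.univ K y hy
  have φunit : ∀ s : nonZeroDivisors S, IsUnit ((φ.restrictScalars ℂ : S →ₐ[ℂ] K) s) := by
    rintro ⟨s, hs⟩
    obtain ⟨r, hr, t, ht⟩ := hS.dvd hP hs
    have := unitR hr
    rw [← φ.commutes, ht, map_mul] at this
    exact isUnit_of_mul_isUnit_left this
  let Φ : FractionRing S →ₐ[ℂ] K := IsLocalization.liftAlgHom φunit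
  have Φs : ∀ s, Φ (algebraMap S _ s) = φ s := fun s => IsLocalization.lift_eq φunit s
  have φinj : Function.Injective φ := by
    rw [injective_iff_map_eq_zero]
    intro s hs
    obtain ⟨n, g0, g1, g2, e⟩ := hS.normal s
    have e1 := congrArg φ e
    rw [map_mul, hs, mul_zero] at e1
    simp only [map_add, map_mul, map_pow, hφ, AlgHom.commutes] at e1
    have e2 : algebraMap B K (algebraMap R B g0 * w ^ 2 + algebraMap R B g1 * (x * w)
        + algebraMap R B g2 * x ^ 2) = 0 := by
      simp only [map_add, map_mul, map_pow, ← IsScalarTower.algebraMap_apply]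
      rw [← hyw]
      linear_combination - algebraMap B K w ^ 2 * e1
    rw [map_eq_zero_iff _ injK] at e2
    obtain ⟨rfl, rfl, rfl⟩ := hB.indep hP hQ (ζ := algebraMap ℂ R ζ)
      (by rw [← map_pow, ← map_one (algebraMap ℂ R), ← map_add, ← map_add, hζ, map_zero])
      (by
        have := (IsUnit.mk0 (3 : ℂ) (by norm_num)).map (algebraMap ℂ R)
        rwa [map_ofNat] at this) e2
    simp only [map_zero, zero_mul, add_zero] at e
    exact (mem_nonZeroDivisors_iff.mp (pow_mem hS.reg n)).1 _ e
  have Φinj : Function.Injective Φ := by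
    rw [injective_iff_map_eq_zero]
    intro q hq
    obtain ⟨⟨s, d⟩, hsd⟩ := IsLocalization.surj (nonZeroDivisors S) q
    have : φ s = 0 := by
      rw [← Φs, ← hsd, map_mul, hq, zero_mul]
    rw [φinj (this.trans (map_zero φ).symm), map_zero] at hsd
    exact (IsLocalization.map_units (FractionRing S) d).mul_left_eq_zero.mp hsd
  -- the range
  have τy : τ y = y := by
    have h1 := congrArg τ hyw
    rw [map_mul, τw, τx, ← hyw, mul_smul_comm] at h1
    have h2 := congrArg (fun k => ζ ^ 2 • k) h1
    simp only [smul_smul] at h2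
    rw [show ζ ^ 2 * ζ = 1 by rw [← hζ3]; ring, one_smul, one_smul] at h2
    exact uw.mul_right_cancel h2
  have Φτ : ∀ q, τ (Φ q) = Φ q := by
    have : (τR.toAlgHom.comp φ) = φ := by
      apply hS.hom_ext
      rw [AlgHom.comp_apply, hφ]
      exact τy
    have : (τ.toAlgHom.comp Φ).toRingHom = Φ.toRingHom := by
      apply IsLocalization.ringHom_ext (nonZeroDivisors S)
      ext s
      change τ (Φ (algebraMap S _ s)) = Φ (algebraMap S _ s)
      rw [Φs]
      exact congrArg (fun k => k s) this
    intro q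
    exact congrArg (fun k => k q) this
  have Φr : ∀ r : R, Φ (algebraMap S _ (algebraMap R S r)) = algebraMap R K r := fun r => by
    rw [Φs, φ.commutes]
  have yR : y ∈ Φ.range := ⟨algebraMap S _ v, (Φs v).trans hφ⟩
  have rR : ∀ r : R, algebraMap R K r ∈ Φ.range := fun r => ⟨_, Φr r⟩
  have avg : ∀ b : B, algebraMap B K (b + f b + f (f b)) ∈ Φ.range := by
    intro b
    have hb : b ∈ Submodule.span R (Submonoid.closure {w, x} : Set B) := by
      rw [← Algebra.adjoin_eq_span, hB.gen]; trivial
    induction hb using Submodule.span_induction with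
    | zero => simp
    | add b c _ _ hb hc =>
      have : b + c + f (b + c) + f (f (b + c)) = (b + f b + f (f b)) + (c + f c + f (f c)) := by
        simp only [map_add]; ring
      rw [this, map_add]
      exact add_mem hb hc
    | smul r b _ hb =>
      have : r • b + f (r • b) + f (f (r • b)) = algebraMap R B r * (b + f b + f (f b)) := by
        rw [map_smul, map_smul]
        simp only [Algebra.smul_def]; ring
      rw [this, map_mul, ← IsScalarTower.algebraMap_apply]
      exact mul_mem (rR r) hb
    | mem b hb =>
      obtain ⟨i, j, rfl⟩ := (Submonoid.mem_closure_pair _ _ _).mp hb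
      have f1 : f (w ^ i * x ^ j) = ζ ^ (i + j) • (w ^ i * x ^ j) := by
        rw [map_mul, map_pow, map_pow, fw, fx, smul_pow, smul_pow, smul_mul_smul_comm, pow_add]
      have f2 : w ^ i * x ^ j + f (w ^ i * x ^ j) + f (f (w ^ i * x ^ j)) =
          (1 + ζ ^ (i + j) + (ζ ^ (i + j)) ^ 2) • (w ^ i * x ^ j) := by
        rw [f1, fsm, f1, smul_smul, add_smul, add_smul, one_smul, sq]
      rw [f2, alg_smul]
      by_cases hd : 3 ∣ i + j
      · apply Subalgebra.smul_mem
        obtain ⟨k, hk⟩ := hd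
        have : algebraMap B K (w ^ i * x ^ j) = y ^ j * algebraMap R K P ^ k := by
          rw [map_mul, map_pow, map_pow, ← hyw, mul_pow, ← hwK, ← pow_mul, ← hk, pow_add]
          ring
        rw [this]
        exact mul_mem (pow_mem yR j) (pow_mem (rR P) k)
      · rw [sum_roots hζ _ hd, zero_smul]
        exact zero_mem _
  have rangeEq : Φ.range = AlgHom.equalizer τ.toAlgHom (AlgHom.id ℂ K) := by
    apply le_antisymm
    · rintro _ ⟨q, rfl⟩
      exact Φτ q
    · intro k hk
      have hk : τ k = k := hk
      obtain ⟨⟨b, d⟩, hbd⟩ := IsLocalization.surj (nonZeroDivisors B) k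
      obtain ⟨r, hr, t, ht⟩ := hB.dvd d.2
      have h1 : k * algebraMap R K r = algebraMap B K (b * t) := by
        rw [IsScalarTower.algebraMap_apply R B K, ht, map_mul, ← mul_assoc, hbd, map_mul]
      have h2 : f (b * t) = b * t := by
        apply injK
        rw [← τb, ← h1, map_mul, hk, IsScalarTower.algebraMap_apply R B K, τr]
      have h3 := avg (b * t)
      rw [h2, h2, show b * t + b * t + b * t = (3 : ℂ) • (b * t) by
        rw [show (3 : ℂ) = 1 + 1 + 1 by norm_num, add_smul, add_smul, one_smul], alg_smul,
        ← h1] at h3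
      have h4 := Φ.range.smul_mem h3 (3 : ℂ)⁻¹
      rw [smul_smul, inv_mul_cancel₀ (by norm_num), one_smul] at h4
      obtain ⟨q, hq⟩ := h4
      have hq : Φ q = k * algebraMap R K r := hq
      have hrS : algebraMap R S r ∈ nonZeroDivisors S := by
        rw [mem_nonZeroDivisors_iff_right]
        intro s hs
        have := congrArg φ hs
        rw [map_mul, φ.commutes, map_zero] at this
        exact φinj (((unitR hr).mul_left_eq_zero.mp this).trans (map_zero φ).symm)
      obtain ⟨j, hj⟩ := (IsLocalization.map_units (FractionRing S)
        (⟨_, hrS⟩ : nonZeroDivisors S)).exists_right_inv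
      refine ⟨q * j, ?_⟩
      change Φ (q * j) = k
      have hj' := congrArg Φ hj
      rw [map_mul, map_one] at hj'
      simp only [Φr] at hj'
      rw [map_mul, hq, mul_assoc, hj', mul_one]
  let ψ := (AlgEquiv.ofInjective Φ Φinj).trans (Subalgebra.equivOfEq _ _ rangeEq)
  have ψq : ∀ q, ((ψ q : AlgHom.equalizer τ.toAlgHom (AlgHom.id ℂ K)) : K) = Φ q := fun q => rfl
  refine ⟨ψ, ?_, ?_⟩
  · rw [ψq, Φs, hφ]; exact hyw
  · intro r
    rw [ψq, Φr, IsScalarTower.algebraMap_apply R B K]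

abbrev R2 : Type := MvPolynomial (Fin 2) ℂ

def P2 (a b c : ℂ) : R2 := X 0 * (X 0 - 1) * (C (b - c)⁻¹ * (C b - X 0)) *
  (C (c - b)⁻¹ * (C c - X 0)) * ((C (b - c)⁻¹ * (C b - X 0)) * C (b₁ a b c)
    - (C (c - b)⁻¹ * (C c - X 0)) * C (a₁ a b c))

def Q2 : R2 := X 1 * (X 1 + 1)

def ι4 : R2 →ₐ[ℂ] MvPolynomial (Fin 4) ℂ := aeval ![X 0, X 2]

def ι3 : R2 →ₐ[ℂ] MvPolynomial (Fin 3) ℂ := aeval ![X 0, X 1]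

lemma ι4_P (a b c : ℂ) : ι4 (P2 a b c) = P4 a b c := by
  simp [ι4, P2, P4, A₁4, B₁4, MvPolynomial.algebraMap_eq]

lemma ι4_Q : ι4 Q2 = X 2 * (X 2 + 1) := by
  simp [ι4, Q2]

lemma ι3_eq (a b c : ℂ) : pS₂ a b c = X 2 ^ 3 * ι3 (P2 a b c) - ι3 Q2 := by
  simp [ι3, P2, Q2, pS₂, A₁', B₁', MvPolynomial.algebraMap_eq]

@[reducible] def algQ {n : ℕ} (ι : R2 →ₐ[ℂ] MvPolynomial (Fin n) ℂ)
    (I : Ideal (MvPolynomial (Fin n) ℂ)) : Algebra R2 (MvPolynomial (Fin n) ℂ ⧸ I) :=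
  ((Ideal.Quotient.mk I).comp ι.toRingHom).toAlgebra

lemma towQ {n : ℕ} (ι : R2 →ₐ[ℂ] MvPolynomial (Fin n) ℂ)
    (I : Ideal (MvPolynomial (Fin n) ℂ)) :
    letI := algQ ι I
    IsScalarTower ℂ R2 (MvPolynomial (Fin n) ℂ ⧸ I) := by
  letI := algQ ι I
  apply IsScalarTower.of_algebraMap_eq
  intro r
  change _ = Ideal.Quotient.mk I (ι (algebraMap ℂ R2 r))
  rw [AlgHom.commutes]
  rfl

/-- universal property of the quotient -/
lemma univQ {n : ℕ} (ι : R2 →ₐ[ℂ] MvPolynomial (Fin n) ℂ)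
    (I : Ideal (MvPolynomial (Fin n) ℂ)) (T : Type) [CommRing T] [Algebra R2 T]
    (g : Fin n → T)
    (h0 : ∀ i : Fin 2, MvPolynomial.eval₂ ((algebraMap R2 T).comp C) g (ι (X i)) =
      algebraMap R2 T (X i))
    (hI : (∀ r : R2, MvPolynomial.eval₂ ((algebraMap R2 T).comp C) g (ι r) = algebraMap R2 T r) →
      ∀ p ∈ I, MvPolynomial.eval₂ ((algebraMap R2 T).comp C) g p = 0) :
    letI := algQ ι I
    ∃ f : (MvPolynomial (Fin n) ℂ ⧸ I) →ₐ[R2] T, ∀ i, f (Ideal.Quotient.mk I (X i)) = g i := by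
  letI := algQ ι I
  let F : MvPolynomial (Fin n) ℂ →+* T := MvPolynomial.eval₂Hom ((algebraMap R2 T).comp C) g
  have hF : ∀ r : R2, F (ι r) = algebraMap R2 T r := by
    intro r
    have : F.comp ι.toRingHom = algebraMap R2 T := by
      apply MvPolynomial.ringHom_ext
      · intro c
        change F (ι (C c)) = _
        rw [← MvPolynomial.algebraMap_eq, AlgHom.commutes]
        simp [F, MvPolynomial.algebraMap_eq]
      · exact h0
    exact congrArg (fun k => k r) this
  refine ⟨{ Ideal.Quotient.lift I F (hI hF) with commutes' := ?_ }, ?_⟩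
  · intro r
    exact hF r
  · intro i
    change F (X i) = g i
    simp [F]

lemma genQ {n : ℕ} (ι : R2 →ₐ[ℂ] MvPolynomial (Fin n) ℂ)
    (I : Ideal (MvPolynomial (Fin n) ℂ)) :
    letI := algQ ι I
    ∀ (A : Subalgebra R2 (MvPolynomial (Fin n) ℂ ⧸ I)),
    (∀ i, Ideal.Quotient.mk I (X i) ∈ A) → A = ⊤ := by
  letI := algQ ι I
  intro A hA
  rw [eq_top_iff]
  rintro y -
  obtain ⟨p, rfl⟩ := Ideal.Quotient.mk_surjective y
  induction p using MvPolynomial.induction_on with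
  | C c =>
    have := A.algebraMap_mem (C c)
    change Ideal.Quotient.mk I (ι (C c)) ∈ A at this
    rwa [← MvPolynomial.algebraMap_eq, AlgHom.commutes] at this
  | add p q hp hq => rw [map_add]; exact add_mem hp hq
  | mul_X p i hp => rw [map_mul]; exact mul_mem hp (hA i)

lemma isB_conc (a b c : ℂ) :
    letI := algQ ι4 (Ideal.span {pC₁ a b c, pF₁4})
    IsB R2 (HSurf2 (pC₁ a b c) pF₁4) (P2 a b c) Q2 (Ideal.Quotient.mk _ (X 1))
      (Ideal.Quotient.mk _ (X 3)) := by
  letI := algQ ι4 (Ideal.span {pC₁ a b c, pF₁4})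
  refine ⟨?_, ?_, ?_, ?_⟩
  · change _ = Ideal.Quotient.mk _ (ι4 _)
    rw [ι4_P, ← map_pow, Ideal.Quotient.eq]
    exact Ideal.subset_span (Or.inl rfl)
  · change _ = Ideal.Quotient.mk _ (ι4 _)
    rw [ι4_Q, ← map_pow, Ideal.Quotient.eq]
    exact Ideal.subset_span (Or.inr rfl)
  · apply genQ
    intro i
    fin_cases i
    · have := (Algebra.adjoin R2 {Ideal.Quotient.mk (Ideal.span {pC₁ a b c, pF₁4}) (X 1),
        Ideal.Quotient.mk (Ideal.span {pC₁ a b c, pF₁4}) (X 3)}).algebraMap_mem (X 0)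
      change Ideal.Quotient.mk _ (ι4 (X 0)) ∈ _ at this
      simpa [ι4] using this
    · exact Algebra.subset_adjoin (Or.inl rfl)
    · have := (Algebra.adjoin R2 {Ideal.Quotient.mk (Ideal.span {pC₁ a b c, pF₁4}) (X 1),
        Ideal.Quotient.mk (Ideal.span {pC₁ a b c, pF₁4}) (X 3)}).algebraMap_mem (X 1)
      change Ideal.Quotient.mk _ (ι4 (X 1)) ∈ _ at this
      simpa [ι4] using this
    · exact Algebra.subset_adjoin (Or.inr rfl)
  · intro T _ _ w' x' hw hx
    obtain ⟨f, hf⟩ := univQ ι4 (Ideal.span {pC₁ a b c, pF₁4}) T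
      ![algebraMap R2 T (X 0), w', algebraMap R2 T (X 1), x']
      (by intro i; fin_cases i <;> simp [ι4]) (by
        intro hr p hp
        have : Ideal.span {pC₁ a b c, pF₁4} ≤ RingHom.ker (MvPolynomial.eval₂Hom
            ((algebraMap R2 T).comp C) ![algebraMap R2 T (X 0), w', algebraMap R2 T (X 1), x']) := by
          rw [Ideal.span_le]
          rintro q (rfl | rfl)
          · change MvPolynomial.eval₂ _ _ _ = 0
            rw [pC₁, ← ι4_P, MvPolynomial.eval₂_sub, hr]
            simp [hw]
          · change MvPolynomial.eval₂ _ _ _ = 0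
            rw [pF₁4, ← ι4_Q, MvPolynomial.eval₂_sub, hr]
            simp [hx]
        exact this hp)
    exact ⟨f, hf 1, hf 3⟩

lemma P2_fac {a b c : ℂ} (hbc : b ≠ c) : P2 a b c =
    C (-(b - c)⁻¹ ^ 3) * (X 0 - C 0) * (X 0 - C 1) * (X 0 - C b) * (X 0 - C c) * (X 0 - C a) := by
  have h : b - c ≠ 0 := sub_ne_zero.mpr hbc
  have h1 : (c - b)⁻¹ = - (b - c)⁻¹ := by rw [← neg_sub b c, inv_neg]
  have hk : (C (b - c)⁻¹ : R2) * (C b - C c) = 1 := by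
    rw [← C_sub, ← C_mul, inv_mul_cancel₀ h, C_1]
  have e1 : (C (a₁ a b c) : R2) = (C a - C b) * C (b - c)⁻¹ := by
    rw [a₁, div_eq_mul_inv, C_mul, C_sub]
  have e2 : (C (b₁ a b c) : R2) = - (C a - C c) * C (b - c)⁻¹ := by
    rw [b₁, div_eq_mul_inv, h1, C_mul, C_sub, C_neg]; ring
  rw [P2, e1, e2, h1]
  simp only [C_neg, C_pow, C_0, C_1]
  set k : R2 := C (b - c)⁻¹
  linear_combination (-X 0 * (X 0 - 1) * k ^ 3 * (X 0 - C b) * (X 0 - C c) * (X 0 - C a)) * hk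

lemma lin_ne {n : ℕ} (i : Fin n) (e : ℂ) : (X i - C e : MvPolynomial (Fin n) ℂ) ≠ 0 := by
  intro h
  have := congrArg (MvPolynomial.eval (fun _ => e + 1)) h
  simp at this

lemma P2_ne {a b c : ℂ} (hbc : b ≠ c) : P2 a b c ≠ 0 := by
  have h : b - c ≠ 0 := sub_ne_zero.mpr hbc
  rw [P2_fac hbc]
  have : (C (-(b - c)⁻¹ ^ 3) : R2) ≠ 0 := by
    rw [Ne, C_eq_zero, neg_eq_zero]
    exact pow_ne_zero _ (inv_ne_zero h)
  exact mul_ne_zero (mul_ne_zero (mul_ne_zero (mul_ne_zero (mul_ne_zero this (lin_ne _ _))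
    (lin_ne _ _)) (lin_ne _ _)) (lin_ne _ _)) (lin_ne _ _)

lemma Q2_ne : Q2 ≠ 0 := by
  intro h
  have := congrArg (MvPolynomial.eval (fun _ => (1 : ℂ))) h
  simp [Q2] at this

/-- If `p(e, t, v) ≠ 0` then `z - e` is regular modulo `p`. -/
lemma lin_reg (p : MvPolynomial (Fin 3) ℂ) (e : ℂ)
    (hp : aeval ![(C e : MvPolynomial (Fin 3) ℂ), X 1, X 2] p ≠ 0) :
    Ideal.Quotient.mk (Ideal.span {p}) (X 0 - C e) ∈ nonZeroDivisors (HSurf p) := by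
  rw [mem_nonZeroDivisors_iff_right]
  intro y hy
  obtain ⟨f, rfl⟩ := Ideal.Quotient.mk_surjective y
  rw [← map_mul, Ideal.Quotient.eq_zero_iff_mem, Ideal.mem_span_singleton] at hy
  obtain ⟨k, hk⟩ := hy
  have h1 := congrArg (aeval ![(C e : MvPolynomial (Fin 3) ℂ), X 1, X 2]) hk
  have h0 : aeval ![(C e : MvPolynomial (Fin 3) ℂ), X 1, X 2]
      (X 0 - C e : MvPolynomial (Fin 3) ℂ) = 0 := by
    simp [MvPolynomial.algebraMap_eq]
  rw [map_mul, h0, mul_zero, map_mul] at h1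
  have h2 := (mul_eq_zero.mp h1.symm).resolve_left hp
  have h3 : ∀ g : MvPolynomial (Fin 3) ℂ, (X 0 - C e : MvPolynomial (Fin 3) ℂ) ∣
      g - aeval ![(C e : MvPolynomial (Fin 3) ℂ), X 1, X 2] g := by
    intro g
    rw [← Ideal.mem_span_singleton, ← Ideal.Quotient.eq]
    have : Ideal.Quotient.mkₐ ℂ (Ideal.span {(X 0 - C e : MvPolynomial (Fin 3) ℂ)}) =
        (Ideal.Quotient.mkₐ ℂ (Ideal.span {(X 0 - C e : MvPolynomial (Fin 3) ℂ)})).comp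
          (aeval ![(C e : MvPolynomial (Fin 3) ℂ), X 1, X 2]) := by
      apply MvPolynomial.algHom_ext
      intro i
      fin_cases i
      · simp only [AlgHom.comp_apply, Ideal.Quotient.mkₐ_eq_mk]
        rw [Ideal.Quotient.eq]
        simpa using Ideal.mem_span_singleton_self _
      · simp
      · simp
    exact congrArg (fun k => k g) this
  obtain ⟨l, hl⟩ := h3 k
  rw [h2, sub_zero] at hl
  rw [Ideal.Quotient.eq_zero_iff_mem, Ideal.mem_span_singleton]
  refine ⟨l, ?_⟩
  apply mul_left_cancel₀ (lin_ne (0 : Fin 3) e)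
  rw [hl] at hk
  linear_combination hk

lemma isS_conc {a b c : ℂ} (hbc : b ≠ c) :
    letI := algQ ι3 (Ideal.span {pS₂ a b c})
    IsS R2 (HSurf (pS₂ a b c)) (P2 a b c) Q2 (Ideal.Quotient.mk _ (X 2)) := by
  letI := algQ ι3 (Ideal.span {pS₂ a b c})
  refine ⟨?_, ?_, ?_, ?_⟩
  · change Ideal.Quotient.mk _ (ι3 _) * _ = Ideal.Quotient.mk _ (ι3 _)
    rw [← map_pow, ← map_mul, Ideal.Quotient.eq, Ideal.mem_span_singleton, ι3_eq, mul_comm]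
  · apply genQ
    intro i
    fin_cases i
    · have := (Algebra.adjoin R2
        {Ideal.Quotient.mk (Ideal.span {pS₂ a b c}) (X 2)}).algebraMap_mem (X 0)
      change Ideal.Quotient.mk _ (ι3 (X 0)) ∈ _ at this
      simpa [ι3] using this
    · have := (Algebra.adjoin R2
        {Ideal.Quotient.mk (Ideal.span {pS₂ a b c}) (X 2)}).algebraMap_mem (X 1)
      change Ideal.Quotient.mk _ (ι3 (X 1)) ∈ _ at this
      simpa [ι3] using this
    · exact Algebra.subset_adjoin rfl
  · intro T _ _ v' hv
    obtain ⟨f, hf⟩ := univQ ι3 (Ideal.span {pS₂ a b c}) T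
      ![algebraMap R2 T (X 0), algebraMap R2 T (X 1), v']
      (by intro i; fin_cases i <;> simp [ι3]) (by
        intro hr p hp
        rw [Ideal.mem_span_singleton] at hp
        obtain ⟨q, rfl⟩ := hp
        rw [MvPolynomial.eval₂_mul, ι3_eq, MvPolynomial.eval₂_sub, MvPolynomial.eval₂_mul, hr, hr,
          ← hv]
        simp [mul_comm])
    exact ⟨f, hf 2⟩
  · have h : b - c ≠ 0 := sub_ne_zero.mpr hbc
    have hfac : ι3 (P2 a b c) = C (-(b - c)⁻¹ ^ 3) * (X 0 - C 0) * (X 0 - C 1) * (X 0 - C b) *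
        (X 0 - C c) * (X 0 - C a) := by
      rw [P2_fac hbc]
      simp [ι3, MvPolynomial.algebraMap_eq]
    have hQ : ∀ e : ℂ, aeval ![(C e : MvPolynomial (Fin 3) ℂ), X 1, X 2] (ι3 Q2) ≠ 0 := by
      intro e h
      have := congrArg (MvPolynomial.eval (fun _ => (1 : ℂ))) h
      simp [Q2, ι3] at this
    have key : ∀ e : ℂ, aeval ![(C e : MvPolynomial (Fin 3) ℂ), X 1, X 2] (ι3 (P2 a b c)) = 0 →
        Ideal.Quotient.mk (Ideal.span {pS₂ a b c}) (X 0 - C e) ∈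
          nonZeroDivisors (HSurf (pS₂ a b c)) := by
      intro e he
      apply lin_reg
      rw [ι3_eq, map_sub, map_mul, he, mul_zero, zero_sub]
      exact neg_ne_zero.mpr (hQ e)
    change Ideal.Quotient.mk _ (ι3 (P2 a b c)) ∈ _
    have hu : Ideal.Quotient.mk (Ideal.span {pS₂ a b c}) (C (-(b - c)⁻¹ ^ 3)) ∈
        nonZeroDivisors (HSurf (pS₂ a b c)) := by
      apply IsUnit.mem_nonZeroDivisors
      apply IsUnit.map
      apply IsUnit.map
      exact IsUnit.mk0 _ (neg_ne_zero.mpr (pow_ne_zero _ (inv_ne_zero h)))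
    rw [hfac] at key ⊢
    simp only [map_mul (Ideal.Quotient.mk (Ideal.span {pS₂ a b c}))]
    refine mul_mem (mul_mem (mul_mem (mul_mem (mul_mem hu (key 0 ?_)) (key 1 ?_)) (key b ?_))
      (key c ?_)) (key a ?_) <;> simp [MvPolynomial.algebraMap_eq]

lemma omega_sum : 1 + ω ^ 2 + (ω ^ 2) ^ 2 = 0 := by
  have hp : IsPrimitiveRoot ω 3 := by
    have := Complex.isPrimitiveRoot_exp 3 (by norm_num)
    simpa [ω] using this
  have h3 := hp.pow_eq_one
  have h1 : ω - 1 ≠ 0 := sub_ne_zero.mpr (hp.ne_one (by norm_num))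
  have h : 1 + ω + ω ^ 2 = 0 := by
    apply mul_left_cancel₀ h1
    linear_combination h3
  linear_combination h + ω * h3

/-- Let `a, b, c ∈ ℂ ∖ {0,1}` be pairwise distinct, let
`K = Frac(ℂ[z,w₂,t₃,x]/(w₂³ − P(z), x³ − t₃(t₃+1)))` be the function field of `C₁ × F₁`,
and let `τ` be the `ℂ`-algebra automorphism of `K` of order 3 determined by
`τ(w₂) = ω²·w₂`, `τ(x) = ω²·x`, `τ(z) = z`, `τ(t₃) = t₃` (the diagonal `ℤ/3ℤ` action).
Then the fixed field `K^τ` is isomorphic as a `ℂ`-algebra to the function field of `S₂`,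
an isomorphism `ψ` being induced by `w₁ ↦ x/w₂` (denominator-free: `ψ(w₁)·w₂ = x`),
with `z, t₃` unchanged. -/
theorem stmt6 (a b c : ℂ) (ha0 : a ≠ 0) (ha1 : a ≠ 1) (hb0 : b ≠ 0) (hb1 : b ≠ 1)
    (hc0 : c ≠ 0) (hc1 : c ≠ 1) (hab : a ≠ b) (hac : a ≠ c) (hbc : b ≠ c) :
    ∃ τ : FractionRing (HSurf2 (pC₁ a b c) pF₁4) ≃ₐ[ℂ] FractionRing (HSurf2 (pC₁ a b c) pF₁4),
      orderOf τ = 3 ∧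
      τ (cls2 (pC₁ a b c) pF₁4 (X 1)) = (ω ^ 2 : ℂ) • cls2 (pC₁ a b c) pF₁4 (X 1) ∧
      τ (cls2 (pC₁ a b c) pF₁4 (X 3)) = (ω ^ 2 : ℂ) • cls2 (pC₁ a b c) pF₁4 (X 3) ∧
      τ (cls2 (pC₁ a b c) pF₁4 (X 0)) = cls2 (pC₁ a b c) pF₁4 (X 0) ∧
      τ (cls2 (pC₁ a b c) pF₁4 (X 2)) = cls2 (pC₁ a b c) pF₁4 (X 2) ∧
      ∃ ψ : FractionRing (HSurf (pS₂ a b c)) ≃ₐ[ℂ]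
          (AlgHom.equalizer τ.toAlgHom (AlgHom.id ℂ (FractionRing (HSurf2 (pC₁ a b c) pF₁4)))),
        (↑(ψ (cls (pS₂ a b c) (X 2))) : FractionRing (HSurf2 (pC₁ a b c) pF₁4))
            * cls2 (pC₁ a b c) pF₁4 (X 1) = cls2 (pC₁ a b c) pF₁4 (X 3) ∧
        (↑(ψ (cls (pS₂ a b c) (X 0))) : FractionRing (HSurf2 (pC₁ a b c) pF₁4))
          = cls2 (pC₁ a b c) pF₁4 (X 0) ∧
        (↑(ψ (cls (pS₂ a b c) (X 1))) : FractionRing (HSurf2 (pC₁ a b c) pF₁4))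
          = cls2 (pC₁ a b c) pF₁4 (X 2) := by
  letI iB := algQ ι4 (Ideal.span {pC₁ a b c, pF₁4})
  letI iS := algQ ι3 (Ideal.span {pS₂ a b c})
  haveI tB := towQ ι4 (Ideal.span {pC₁ a b c, pF₁4})
  haveI tS := towQ ι3 (Ideal.span {pS₂ a b c})
  obtain ⟨τ, h1, h2, h3, h4, ψ, h5, h6⟩ := main_abs (P2_ne hbc) Q2_ne (isB_conc a b c)
    (isS_conc hbc) (ω ^ 2) omega_sum
  have r0 : algebraMap R2 (HSurf2 (pC₁ a b c) pF₁4) (X 0) = Ideal.Quotient.mk _ (X 0) := by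
    change Ideal.Quotient.mk _ (ι4 (X 0)) = _
    simp [ι4]
  have r1 : algebraMap R2 (HSurf2 (pC₁ a b c) pF₁4) (X 1) = Ideal.Quotient.mk _ (X 2) := by
    change Ideal.Quotient.mk _ (ι4 (X 1)) = _
    simp [ι4]
  have s0 : algebraMap R2 (HSurf (pS₂ a b c)) (X 0) = Ideal.Quotient.mk _ (X 0) := by
    change Ideal.Quotient.mk _ (ι3 (X 0)) = _
    simp [ι3]
  have s1 : algebraMap R2 (HSurf (pS₂ a b c)) (X 1) = Ideal.Quotient.mk _ (X 1) := by
    change Ideal.Quotient.mk _ (ι3 (X 1)) = _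
    simp [ι3]
  have k0 := h4 (X 0)
  have k1 := h4 (X 1)
  have l0 := h6 (X 0)
  have l1 := h6 (X 1)
  rw [r0] at k0
  rw [r1] at k1
  rw [r0, s0] at l0
  rw [r1, s1] at l1
  exact ⟨τ, h1, h2, h3, k0, k1, ψ, h5, l0, l1⟩
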